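/- arXiv:2310.07874 — 2 statements merged into one kernel-verified Lean document; each statement's English description precedes it below -/
import Mathlib

section
/- Let k be a positive integer, 1 ≤ p < ∞ a real number, δ > 0, and ℓ ∈ [0, δ]^k. Define the rounding map r^{(ℓ,δ)} : ℝ^k → ℝ^k coordinatewise by r^{(ℓ,δ)}_i(x) = max(⌊(x_i − ℓ_i)/δ⌋·δ + ℓ_i, 0). Then for all x, y ∈ ℝ^k one has ‖r^{(ℓ,δ)}(x) − r^{(ℓ,δ)}(y)‖_p ≤ ‖x − y‖_p + δ·k^{1/p}. -/
open scoped BigOperators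

/-- The ℓ_p norm on `Fin m → ℝ` for a real exponent `p`. -/
noncomputable def pnorm (p : ℝ) {m : ℕ} (x : Fin m → ℝ) : ℝ :=
  (∑ i, |x i| ^ p) ^ (1 / p)

/-- The coordinatewise rounding map `r^{(ℓ,δ)}`. -/
noncomputable def rnd {k : ℕ} (δ : ℝ) (ℓ : Fin k → ℝ) (x : Fin k → ℝ) : Fin k → ℝ :=
  fun i => max ((⌊(x i - ℓ i) / δ⌋ : ℝ) * δ + ℓ i) 0

/-!
Flooring changes the difference of two reals by the difference of their fractional parts, which is
less than `1` in absolute value. After rescaling by `δ` this is a coordinatewise error of at most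
`δ`, which the truncation `max · 0`, being `1`-Lipschitz, does not increase. By Minkowski's
inequality the total error is at most the norm `δ k^{1/p}` of the constant vector `δ`.
-/

theorem abs_floor_sub_floor_lt {R : Type*} [Ring R] [LinearOrder R] [IsStrictOrderedRing R]
    [FloorRing R] (a b : R) : |(⌊a⌋ : R) - ⌊b⌋| < |a - b| + 1 := by
  have hfract : |Int.fract b - Int.fract a| < 1 :=
    abs_sub_lt_of_nonneg_of_lt (Int.fract_nonneg b) (Int.fract_lt_one b)
      (Int.fract_nonneg a) (Int.fract_lt_one a)
  calc |(⌊a⌋ : R) - ⌊b⌋| = |(a - b) + (Int.fract b - Int.fract a)| := by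
        rw [← Int.self_sub_fract a, ← Int.self_sub_fract b]
        congr 1
        abel
    _ ≤ |a - b| + |Int.fract b - Int.fract a| := abs_add_le _ _
    _ < |a - b| + 1 := by gcongr

theorem abs_floor_div_mul_sub_floor_div_mul_lt {K : Type*} [Field K] [LinearOrder K]
    [IsStrictOrderedRing K] [FloorRing K] {δ : K} (hδ : 0 < δ) (a b : K) :
    |(⌊a / δ⌋ : K) * δ - ⌊b / δ⌋ * δ| < |a - b| + δ :=
  calc |(⌊a / δ⌋ : K) * δ - ⌊b / δ⌋ * δ| = |(⌊a / δ⌋ : K) - ⌊b / δ⌋| * δ := by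
        rw [← sub_mul, abs_mul, abs_of_pos hδ]
    _ < (|a / δ - b / δ| + 1) * δ := by
        gcongr
        exact abs_floor_sub_floor_lt _ _
    _ = |a - b| + δ := by
        rw [← sub_div, abs_div, abs_of_pos hδ, add_mul, div_mul_cancel₀ _ hδ.ne', one_mul]

section PNorm

variable {p : ℝ} {m : ℕ}

theorem pnorm_le_pnorm_of_abs_le (hp : 0 ≤ p) {x y : Fin m → ℝ} (h : ∀ i, |x i| ≤ |y i|) :
    pnorm p x ≤ pnorm p y := by
  unfold pnorm
  gcongr (∑ i, ?_ ^ p) ^ (1 / p) with i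
  exact h i

theorem pnorm_abs (x : Fin m → ℝ) : pnorm p |x| = pnorm p x := by
  simp only [pnorm, Pi.abs_apply, abs_abs]

theorem pnorm_const (hp : p ≠ 0) (c : ℝ) :
    pnorm p (fun _ : Fin m => c) = |c| * (m : ℝ) ^ (1 / p) := by
  rw [pnorm, Fin.sum_const, nsmul_eq_mul, Real.mul_rpow (by positivity) (by positivity), one_div,
    Real.rpow_rpow_inv (abs_nonneg c) hp, mul_comm]

theorem pnorm_add_le (hp : 1 ≤ p) (x y : Fin m → ℝ) :
    pnorm p (x + y) ≤ pnorm p x + pnorm p y :=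
  Real.Lp_add_le Finset.univ x y hp

theorem pnorm_le_pnorm_add_of_abs_le (hp : 1 ≤ p) {c : ℝ} (hc : 0 ≤ c) {x y : Fin m → ℝ}
    (h : ∀ i, |x i| ≤ |y i| + c) : pnorm p x ≤ pnorm p y + c * (m : ℝ) ^ (1 / p) := by
  have hp₀ : 0 < p := one_pos.trans_le hp
  calc pnorm p x ≤ pnorm p (|y| + fun _ => c) :=
        pnorm_le_pnorm_of_abs_le hp₀.le fun i => (h i).trans (le_abs_self _)
    _ ≤ pnorm p |y| + pnorm p (fun _ : Fin m => c) := pnorm_add_le hp _ _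
    _ = pnorm p y + c * (m : ℝ) ^ (1 / p) := by
        rw [pnorm_abs, pnorm_const hp₀.ne', abs_of_nonneg hc]

end PNorm

theorem abs_rnd_sub_rnd_lt {k : ℕ} {δ : ℝ} (hδ : 0 < δ) (ℓ x y : Fin k → ℝ) (i : Fin k) :
    |rnd δ ℓ x i - rnd δ ℓ y i| < |x i - y i| + δ :=
  calc |rnd δ ℓ x i - rnd δ ℓ y i|
      ≤ |((⌊(x i - ℓ i) / δ⌋ : ℝ) * δ + ℓ i) - (⌊(y i - ℓ i) / δ⌋ * δ + ℓ i)| :=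
        abs_max_sub_max_le_abs _ _ _
    _ = |(⌊(x i - ℓ i) / δ⌋ : ℝ) * δ - ⌊(y i - ℓ i) / δ⌋ * δ| := by rw [add_sub_add_right_eq_sub]
    _ < |(x i - ℓ i) - (y i - ℓ i)| + δ := abs_floor_div_mul_sub_floor_div_mul_lt hδ _ _
    _ = |x i - y i| + δ := by rw [sub_sub_sub_cancel_right]

theorem stmt4_general {k : ℕ} {p : ℝ} (hp : 1 ≤ p) {δ : ℝ} (hδ : 0 < δ) (ℓ x y : Fin k → ℝ) :
    pnorm p (rnd δ ℓ x - rnd δ ℓ y) ≤ pnorm p (x - y) + δ * (k : ℝ) ^ (1 / p) :=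
  pnorm_le_pnorm_add_of_abs_le hp hδ.le fun i => (abs_rnd_sub_rnd_lt hδ ℓ x y i).le

/-- Rounding increases pairwise ℓ_p distances by at most `δ k^{1/p}`. -/
theorem stmt4 (k : ℕ) (hk : 0 < k) (p : ℝ) (hp : 1 ≤ p) (δ : ℝ) (hδ : 0 < δ)
    (ℓ : Fin k → ℝ) (hℓ : ∀ i, ℓ i ∈ Set.Icc 0 δ) :
    ∀ x y : Fin k → ℝ,
      pnorm p (rnd δ ℓ x - rnd δ ℓ y) ≤ pnorm p (x - y) + δ * (k : ℝ) ^ (1 / p) :=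
  stmt4_general hp hδ ℓ
end

section
/- Let k be a positive integer, 1 ≤ p < ∞ a real number, δ > 0, and ε ≥ 0, and for ℓ ∈ [0,δ]^k let r^{(ℓ,δ)} : ℝ^k → ℝ^k be the rounding map r^{(ℓ,δ)}_i(x) = max(⌊(x_i − ℓ_i)/δ⌋·δ + ℓ_i, 0). Let F and F̂ be Borel probability measures on ℝ^k (with ℝ^k carrying the ℓ_p norm) such that the Lévy–Prokhorov distance satisfies π_p(F, F̂) ≤ ε. Then the average, over ℓ drawn uniformly from [0,δ]^k, of the total variation distance between the rounded distributions satisfies (1/δ^k)·∫_{[0,δ]^k} ‖r^{(ℓ,δ)}_*F − r^{(ℓ,δ)}_*F̂‖_TV dℓ ≤ (1 + k^{1−1/p}/δ)·ε. -/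
open scoped BigOperators
open MeasureTheory

/-- The open ε-thickening of a set w.r.t. the ℓ_p distance. -/
def thick (p : ℝ) {k : ℕ} (ε : ℝ) (A : Set (Fin k → ℝ)) : Set (Fin k → ℝ) :=
  {x | ∃ y ∈ A, pnorm p (x - y) < ε}

/-- The Lévy–Prokhorov distance between Borel measures on `(ℝ^k, ‖·‖_p)`. -/
noncomputable def prokhorov (p : ℝ) {k : ℕ} (P Q : Measure (Fin k → ℝ)) : ℝ :=
  sInf {ε : ℝ | 0 < ε ∧ ∀ A : Set (Fin k → ℝ), MeasurableSet A →
    P A ≤ Q (thick p ε A) + ENNReal.ofReal ε ∧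
    Q A ≤ P (thick p ε A) + ENNReal.ofReal ε}

/-- The total variation distance between measures, as the supremum over measurable sets
of the (symmetrized) difference of their measures. -/
noncomputable def tvDist {α : Type*} [MeasurableSpace α] (μ ν : Measure α) : ENNReal :=
  ⨆ (A : Set α) (_ : MeasurableSet A), (μ A - ν A) ⊔ (ν A - μ A)

/-!
For a fixed offset `ℓ`, the rounded point is a function of the grid cell, so the total variation
distance of the rounded measures is at most `F(B_ℓ) - F'(B_ℓ)`, where `B_ℓ` is the union of the
cells to which `F` gives more mass than `F'`. By Fubini the average of this over `ℓ` is
`∫ h dF - ∫ h dF'`, where `h x` is the probability over `ℓ` that `x ∈ B_ℓ`. Points in the same cell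
are both in `B_ℓ` or both outside it, and a random grid separates `x` from `y` with probability at
most `‖x - y‖₁ / δ ≤ k^(1-1/p) ‖x - y‖_p / δ`. Hence `h` is a Lipschitz function with values in
`[0, 1]`, and integrating the Prokhorov inequality over its superlevel sets bounds
`∫ h dF - ∫ h dF'`.
-/

open ProbabilityTheory Filter Topology
open scoped ENNReal Pointwise

section TotalVariation

variable {α β : Type*} [MeasurableSpace α] [MeasurableSpace β] {μ ν : Measure α}

lemma tvDist_map_le {f : α → β} (hf : Measurable f) :
    tvDist (μ.map f) (ν.map f) ≤ tvDist μ ν := by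
  refine iSup₂_le fun A hA => ?_
  rw [Measure.map_apply hf hA, Measure.map_apply hf hA]
  exact le_iSup₂ (f := fun B (_ : MeasurableSet B) => (μ B - ν B) ⊔ (ν B - μ B)) (f ⁻¹' A) (hf hA)

lemma measure_add_le_of_isHahnDecomposition {W T : Set α} (hW : IsHahnDecomposition ν μ W)
    (hT : MeasurableSet T) : μ T + ν W ≤ μ W + ν T := by
  have le_on_diff : μ (T \ W) ≤ ν (T \ W) := by
    simpa only [Measure.restrict_apply hT, Set.sdiff_eq] using hW.ge_on_compl T
  have le_on_diff' : ν (W \ T) ≤ μ (W \ T) := by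
    simpa only [Measure.restrict_apply hT.compl, Set.sdiff_eq, Set.inter_comm] using hW.le_on Tᶜ
  calc μ T + ν W
      = μ (T ∩ W) + μ (T \ W) + (ν (W ∩ T) + ν (W \ T)) := by
        rw [measure_inter_add_sdiff T hW.measurableSet, measure_inter_add_sdiff W hT]
    _ ≤ μ (T ∩ W) + ν (T \ W) + (ν (W ∩ T) + μ (W \ T)) := by gcongr
    _ = μ (W ∩ T) + μ (W \ T) + (ν (T ∩ W) + ν (T \ W)) := by
        rw [Set.inter_comm W T]; ring
    _ = μ W + ν T := by
        rw [measure_inter_add_sdiff T hW.measurableSet, measure_inter_add_sdiff W hT]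

lemma tvDist_add_le_of_isHahnDecomposition [IsFiniteMeasure μ] [IsFiniteMeasure ν] {W : Set α}
    (hW : IsHahnDecomposition ν μ W) (huniv : μ Set.univ = ν Set.univ) :
    tvDist μ ν + ν W ≤ μ W := by
  have hle : ν W ≤ μ W := by simpa using measure_add_le_of_isHahnDecomposition hW .empty
  suffices h : tvDist μ ν ≤ μ W - ν W by
    simpa only [tsub_add_cancel_of_le hle] using add_le_add_left h (ν W)
  refine iSup₂_le fun T hT => sup_le ?_ ?_
  · rw [tsub_le_iff_right, ENNReal.sub_add_eq_add_sub hle (measure_ne_top ν W)]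
    exact ENNReal.le_sub_of_add_le_right (measure_ne_top ν W)
      (measure_add_le_of_isHahnDecomposition hW hT)
  · rw [tsub_le_iff_right, ENNReal.sub_add_eq_add_sub hle (measure_ne_top ν W)]
    refine ENNReal.le_sub_of_add_le_right (measure_ne_top ν W) ?_
    refine (ENNReal.add_le_add_iff_left (measure_ne_top μ Set.univ)).1 ?_
    calc μ Set.univ + (ν T + ν W) = μ Tᶜ + ν W + (μ T + ν T) := by
          rw [← measure_add_measure_compl hT]; ring
      _ ≤ μ W + ν Tᶜ + (μ T + ν T) :=
          add_le_add_left (measure_add_le_of_isHahnDecomposition hW hT.compl) _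
      _ = μ Set.univ + (μ W + μ T) := by
          rw [huniv, ← measure_add_measure_compl (μ := ν) hT]; ring

lemma measure_le_measure_of_forall_singleton_le [Countable α] [MeasurableSingletonClass α]
    {A : Set α} (h : ∀ a ∈ A, μ {a} ≤ ν {a}) : μ A ≤ ν A := by
  rw [← μ.tsum_indicator_apply_singleton A A.to_countable.measurableSet,
    ← ν.tsum_indicator_apply_singleton A A.to_countable.measurableSet]
  exact ENNReal.tsum_le_tsum fun _ => Set.indicator_le_indicator' (h _)

lemma isHahnDecomposition_setOf_singleton_lt [Countable α] [MeasurableSingletonClass α]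
    (μ ν : Measure α) : IsHahnDecomposition ν μ {a | ν {a} < μ {a}} where
  measurableSet := (Set.to_countable _).measurableSet
  le_on := Measure.le_intro fun A hA _ => by
    rw [Measure.restrict_apply hA, Measure.restrict_apply hA]
    exact measure_le_measure_of_forall_singleton_le fun _ ha => ha.2.le
  ge_on_compl := Measure.le_intro fun A hA _ => by
    rw [Measure.restrict_apply hA, Measure.restrict_apply hA]
    exact measure_le_measure_of_forall_singleton_le fun _ ha => not_lt.1 ha.2

end TotalVariation

section RandomDiscretization

variable {Ω α β : Type*} [MeasurableSpace Ω] [MeasurableSpace α]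
  {g : Ω → α → β} {μ ν : Measure α} {U : Measure Ω}

/-- For a random discretization `g ω : α → β`, the pairs `(ω, x)` such that the cell of `x` under
`g ω` has larger `μ`-measure than `ν`-measure. It is kept as a subset of the product because the
argument slices it both ways. -/
def excessSet (g : Ω → α → β) (μ ν : Measure α) : Set (Ω × α) :=
  {q | ν (g q.1 ⁻¹' {g q.1 q.2}) < μ (g q.1 ⁻¹' {g q.1 q.2})}

/-- The probability, when `ω` is drawn from `U`, that `x` lies in a cell of `g ω` with larger
`μ`-measure than `ν`-measure. -/
noncomputable def excessProb (U : Measure Ω) (g : Ω → α → β) (μ ν : Measure α) (x : α) : ℝ :=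
  U.real {ω | (ω, x) ∈ excessSet g μ ν}

lemma excessProb_le_add [IsFiniteMeasure U] (x y : α) :
    excessProb U g μ ν y ≤ excessProb U g μ ν x + U.real {ω | g ω x ≠ g ω y} := by
  refine (measureReal_mono fun ω hω => ?_).trans (measureReal_union_le _ _)
  by_cases hxy : g ω x = g ω y
  · left
    simpa only [excessSet, Set.mem_ofPred_eq, hxy] using hω
  · exact Or.inr hxy

variable [MeasurableSpace β] [Countable β] [MeasurableSingletonClass β]

lemma measurable_measure_fiber [SFinite μ] (hg : Measurable (Function.uncurry g)) :
    Measurable fun q : Ω × α => μ (g q.1 ⁻¹' {g q.1 q.2}) := by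
  have hcell : Measurable fun r : Ω × β => μ (g r.1 ⁻¹' {r.2}) :=
    measurable_from_prod_countable_left fun b =>
      measurable_measure_prodMk_left (hg (measurableSet_singleton b))
  exact hcell.comp (measurable_fst.prodMk hg)

lemma measurableSet_excessSet [SFinite μ] [SFinite ν] (hg : Measurable (Function.uncurry g)) :
    MeasurableSet (excessSet g μ ν) :=
  measurableSet_lt (measurable_measure_fiber hg) (measurable_measure_fiber hg)

lemma tvDist_map_add_le [IsFiniteMeasure μ] [IsFiniteMeasure ν]
    (hg : Measurable (Function.uncurry g)) (huniv : μ Set.univ = ν Set.univ) (ω : Ω) :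
    tvDist (μ.map (g ω)) (ν.map (g ω)) + ν (Prod.mk ω ⁻¹' excessSet g μ ν) ≤
      μ (Prod.mk ω ⁻¹' excessSet g μ ν) := by
  have hgω : Measurable (g ω) := hg.of_uncurry_left
  have hmap (ρ : Measure α) (B : Set β) : ρ.map (g ω) B = ρ (g ω ⁻¹' B) :=
    Measure.map_apply hgω B.to_countable.measurableSet
  have h := tvDist_add_le_of_isHahnDecomposition
    (isHahnDecomposition_setOf_singleton_lt (μ.map (g ω)) (ν.map (g ω)))
    (by simpa only [hmap, Set.preimage_univ] using huniv)
  simp only [hmap] at h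
  exact h

lemma measurable_excessProb [SFinite U] [SFinite μ] [SFinite ν]
    (hg : Measurable (Function.uncurry g)) : Measurable (excessProb U g μ ν) :=
  (measurable_measure_prodMk_right (measurableSet_excessSet hg)).ennreal_toReal

lemma lintegral_excessProb [IsFiniteMeasure U] [SFinite μ] [SFinite ν]
    (hg : Measurable (Function.uncurry g)) (ρ : Measure α) [SFinite ρ] :
    ∫⁻ x, ENNReal.ofReal (excessProb U g μ ν x) ∂ρ =
      ∫⁻ ω, ρ (Prod.mk ω ⁻¹' excessSet g μ ν) ∂U := by
  have hE : MeasurableSet (excessSet g μ ν) := measurableSet_excessSet hg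
  calc ∫⁻ x, ENNReal.ofReal (excessProb U g μ ν x) ∂ρ
      = ∫⁻ x, U ((fun ω => (ω, x)) ⁻¹' excessSet g μ ν) ∂ρ :=
        lintegral_congr fun _ => ofReal_measureReal
    _ = U.prod ρ (excessSet g μ ν) := (Measure.prod_apply_symm hE).symm
    _ = ∫⁻ ω, ρ (Prod.mk ω ⁻¹' excessSet g μ ν) ∂U := Measure.prod_apply hE

lemma lintegral_tvDist_map_add_le [IsFiniteMeasure U] [IsFiniteMeasure μ] [IsFiniteMeasure ν]
    (hg : Measurable (Function.uncurry g)) (huniv : μ Set.univ = ν Set.univ) :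
    ∫⁻ ω, tvDist (μ.map (g ω)) (ν.map (g ω)) ∂U +
        ∫⁻ x, ENNReal.ofReal (excessProb U g μ ν x) ∂ν ≤
      ∫⁻ x, ENNReal.ofReal (excessProb U g μ ν x) ∂μ := by
  rw [lintegral_excessProb hg, lintegral_excessProb hg,
    ← lintegral_add_right _ (measurable_measure_prodMk_left (measurableSet_excessSet hg))]
  exact lintegral_mono (tvDist_map_add_le hg huniv)

end RandomDiscretization

section Prokhorov

lemma lintegral_ofReal_eq_setLIntegral_Ioc {α : Type*} [MeasurableSpace α] {μ : Measure α}
    {f : α → ℝ} (hf : Measurable f) (hf0 : ∀ x, 0 ≤ f x) (hf1 : ∀ x, f x ≤ 1) :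
    ∫⁻ x, ENNReal.ofReal (f x) ∂μ = ∫⁻ t in Set.Ioc 0 1, μ {x | t ≤ f x} := by
  have hempty : ∀ t ∈ Set.Ioi (1 : ℝ), μ {x | t ≤ f x} = 0 := fun t ht => by
    simp [fun x => ((hf1 x).trans_lt ht).not_ge]
  rw [lintegral_eq_lintegral_meas_le μ (.of_forall hf0) hf.aemeasurable,
    ← Set.Ioc_union_Ioi_eq_Ioi zero_le_one,
    lintegral_union measurableSet_Ioi (Set.Ioc_disjoint_Ioi le_rfl),
    setLIntegral_eq_zero measurableSet_Ioi hempty, add_zero]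

lemma lintegral_le_of_measure_superlevel_le {α : Type*} [MeasurableSpace α] {μ ν : Measure α}
    {f : α → ℝ} {c : ℝ} {e : ℝ≥0∞} (hf : Measurable f) (hf0 : ∀ x, 0 ≤ f x) (hf1 : ∀ x, f x ≤ 1)
    (hc : 0 ≤ c) (h : ∀ t, μ {x | t ≤ f x} ≤ ν {x | t ≤ f x + c} + e) :
    ∫⁻ x, ENNReal.ofReal (f x) ∂μ ≤
      ∫⁻ x, ENNReal.ofReal (f x) ∂ν + (ENNReal.ofReal c * ν Set.univ + e) := by
  calc ∫⁻ x, ENNReal.ofReal (f x) ∂μ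
      = ∫⁻ t in Set.Ioc 0 1, μ {x | t ≤ f x} := lintegral_ofReal_eq_setLIntegral_Ioc hf hf0 hf1
    _ ≤ ∫⁻ t in Set.Ioc 0 1, (ν {x | t ≤ f x + c} + e) := lintegral_mono h
    _ = (∫⁻ t in Set.Ioc 0 1, ν {x | t ≤ f x + c}) + e := by
        rw [lintegral_add_right _ measurable_const]; simp
    _ ≤ (∫⁻ t in Set.Ioi 0, ν {x | t ≤ f x + c}) + e := by
        gcongr; exact Set.Ioc_subset_Ioi_self
    _ = ∫⁻ x, ENNReal.ofReal (f x + c) ∂ν + e := by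
        rw [lintegral_eq_lintegral_meas_le ν (.of_forall fun x => add_nonneg (hf0 x) hc)
          (hf.add_const c).aemeasurable]
    _ = ∫⁻ x, ENNReal.ofReal (f x) ∂ν + (ENNReal.ofReal c * ν Set.univ + e) := by
        simp_rw [fun x => ENNReal.ofReal_add (hf0 x) hc]
        rw [lintegral_add_right _ measurable_const, lintegral_const, add_assoc]

variable {k : ℕ} {p ε : ℝ} {P Q : Measure (Fin k → ℝ)}

lemma lintegral_le_of_measure_le_measure_thick {f : (Fin k → ℝ) → ℝ} {L : ℝ} {e : ℝ≥0∞}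
    (hf : Measurable f) (hf0 : ∀ x, 0 ≤ f x) (hf1 : ∀ x, f x ≤ 1) (hL : 0 ≤ L) (hε : 0 ≤ ε)
    (hLip : ∀ x y, f y ≤ f x + L * pnorm p (x - y))
    (h : ∀ A, MeasurableSet A → P A ≤ Q (thick p ε A) + e) :
    ∫⁻ x, ENNReal.ofReal (f x) ∂P ≤
      ∫⁻ x, ENNReal.ofReal (f x) ∂Q + (ENNReal.ofReal (L * ε) * Q Set.univ + e) := by
  refine lintegral_le_of_measure_superlevel_le hf hf0 hf1 (mul_nonneg hL hε) fun t => ?_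
  have hthick : thick p ε {x | t ≤ f x} ⊆ {x | t ≤ f x + L * ε} := by
    rintro x ⟨y, hy, hxy⟩
    calc t ≤ f y := hy
      _ ≤ f x + L * pnorm p (x - y) := hLip x y
      _ ≤ f x + L * ε := by gcongr
  exact (h _ (hf measurableSet_Ici)).trans (add_le_add_left (measure_mono hthick) e)

lemma thick_mono {ε₁ ε₂ : ℝ} (h : ε₁ ≤ ε₂) (A : Set (Fin k → ℝ)) : thick p ε₁ A ⊆ thick p ε₂ A :=
  fun _ ⟨y, hy, hxy⟩ => ⟨y, hy, hxy.trans_le h⟩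

lemma measure_le_measure_thick_add_of_prokhorov_lt [IsFiniteMeasure P] [IsFiniteMeasure Q]
    (h : prokhorov p P Q < ε) {A : Set (Fin k → ℝ)} (hA : MeasurableSet A) :
    P A ≤ Q (thick p ε A) + ENNReal.ofReal ε := by
  -- `sInf ∅ = 0` in `ℝ`, so the infimum says something only once some radius is admissible.
  have total_mass_admissible : {ε : ℝ | 0 < ε ∧ ∀ A : Set (Fin k → ℝ), MeasurableSet A →
      P A ≤ Q (thick p ε A) + ENNReal.ofReal ε ∧
      Q A ≤ P (thick p ε A) + ENNReal.ofReal ε}.Nonempty := by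
    have hP (B : Set (Fin k → ℝ)) := measureReal_mono (μ := P) (Set.subset_univ B)
    have hQ (B : Set (Fin k → ℝ)) := measureReal_mono (μ := Q) (Set.subset_univ B)
    have hP0 : 0 ≤ P.real Set.univ := measureReal_nonneg
    have hQ0 : 0 ≤ Q.real Set.univ := measureReal_nonneg
    refine ⟨P.real Set.univ + Q.real Set.univ + 1, by positivity, fun B _ =>
      ⟨le_add_left ?_, le_add_left ?_⟩⟩
    · exact (ofReal_measureReal ..).symm.trans_le (ENNReal.ofReal_le_ofReal (by linarith [hP B]))
    · exact (ofReal_measureReal ..).symm.trans_le (ENNReal.ofReal_le_ofReal (by linarith [hQ B]))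
  obtain ⟨ε', ⟨-, hε'⟩, hlt⟩ := exists_lt_of_csInf_lt total_mass_admissible h
  refine (hε' A hA).1.trans ?_
  gcongr
  exact thick_mono hlt.le A

lemma sum_abs_le_rpow_mul_pnorm (hp : 1 ≤ p) (x : Fin k → ℝ) :
    ∑ i, |x i| ≤ (k : ℝ) ^ (1 - 1 / p) * pnorm p x := by
  have hp0 : 0 < p := one_pos.trans_le hp
  calc ∑ i, |x i| = ((∑ i, |x i|) ^ p) ^ (1 / p) := by
        rw [one_div, Real.rpow_rpow_inv (by positivity) hp0.ne']
    _ ≤ ((k : ℝ) ^ (p - 1) * ∑ i, |x i| ^ p) ^ (1 / p) := by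
        gcongr
        simpa using Real.rpow_sum_le_const_mul_sum_rpow (s := Finset.univ) (f := x) hp
    _ = (k : ℝ) ^ (1 - 1 / p) * pnorm p x := by
        rw [Real.mul_rpow (by positivity) (by positivity), ← Real.rpow_mul (by positivity), pnorm]
        congr 2
        field_simp

end Prokhorov

section Grid

variable {ι : Type*} {δ : ℝ}

/-- The index of the cell containing `x` in the cubical grid of mesh `δ` and offset `ℓ`. Rounding
factors through it, and it takes only countably many values. -/
noncomputable def gridIndex (δ : ℝ) (ℓ x : ι → ℝ) : ι → ℤ :=
  fun i => ⌊(x i - ℓ i) / δ⌋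

lemma measurable_uncurry_gridIndex (δ : ℝ) :
    Measurable (Function.uncurry (gridIndex (ι := ι) δ)) :=
  measurable_pi_lambda _ fun i => Measurable.floor (by fun_prop)

lemma tvDist_map_rnd_le {k : ℕ} (δ : ℝ) (ℓ : Fin k → ℝ) (μ ν : Measure (Fin k → ℝ)) :
    tvDist (μ.map (rnd δ ℓ)) (ν.map (rnd δ ℓ)) ≤
      tvDist (μ.map (gridIndex δ ℓ)) (ν.map (gridIndex δ ℓ)) := by
  have hsnap : Measurable fun (z : Fin k → ℤ) i => max ((z i : ℝ) * δ + ℓ i) 0 :=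
    measurable_of_countable _
  have hidx : Measurable (gridIndex δ ℓ) := (measurable_uncurry_gridIndex δ).of_uncurry_left
  have hrnd : rnd δ ℓ = (fun z i => max ((z i : ℝ) * δ + ℓ i) 0) ∘ gridIndex δ ℓ := rfl
  rw [hrnd, ← Measure.map_map hsnap hidx, ← Measure.map_map hsnap hidx]
  exact tvDist_map_le hsnap

lemma exists_add_int_mul_mem_Ioc_of_floor_ne (hδ : 0 < δ) {a b s : ℝ} (hab : a ≤ b)
    (hs : ⌊(a - s) / δ⌋ ≠ ⌊(b - s) / δ⌋) : ∃ n : ℤ, s + n * δ ∈ Set.Ioc a b := by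
  have hlt : ⌊(a - s) / δ⌋ < ⌊(b - s) / δ⌋ :=
    (Int.floor_mono (by gcongr)).lt_of_ne hs
  have hleft := (div_lt_iff₀ hδ).1 (Int.floor_lt.1 hlt)
  have hright := (le_div_iff₀ hδ).1 (Int.floor_le ((b - s) / δ))
  exact ⟨⌊(b - s) / δ⌋, by linarith, by linarith⟩

lemma volume_restrict_Icc_setOf_floor_ne_le (hδ : 0 < δ) (a b : ℝ) :
    volume.restrict (Set.Icc 0 δ) {s | ⌊(a - s) / δ⌋ ≠ ⌊(b - s) / δ⌋} ≤
      ENNReal.ofReal |a - b| := by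
  wlog hab : a ≤ b generalizing a b
  · simpa only [ne_comm, abs_sub_comm] using this b a (le_of_not_ge hab)
  have hsub : {s | ⌊(a - s) / δ⌋ ≠ ⌊(b - s) / δ⌋} ⊆
      ⋃ v : AddSubgroup.zmultiples δ, v +ᵥ Set.Ioc a b := by
    intro s hs
    obtain ⟨n, hn⟩ := exists_add_int_mul_mem_Ioc_of_floor_ne hδ hab hs
    refine Set.mem_iUnion.2 ⟨⟨-n • δ, -n, rfl⟩, Set.mem_vadd_set_iff_neg_vadd_mem.2 ?_⟩
    simpa [AddSubgroup.vadd_def, add_comm] using hn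
  -- The translates of `(a, b]` by `δℤ`, cut down to one period, have total length `b - a`.
  have hfund : IsAddFundamentalDomain (AddSubgroup.zmultiples δ) (Set.Ioc 0 δ) := by
    simpa using isAddFundamentalDomain_Ioc hδ 0
  rw [← restrict_Ioc_eq_restrict_Icc]
  calc volume.restrict (Set.Ioc 0 δ) {s | ⌊(a - s) / δ⌋ ≠ ⌊(b - s) / δ⌋}
      ≤ ∑' v : AddSubgroup.zmultiples δ, volume.restrict (Set.Ioc 0 δ) (v +ᵥ Set.Ioc a b) :=
        (measure_mono hsub).trans (measure_iUnion_le _)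
    _ = volume (Set.Ioc a b) := by
        simp only [Measure.restrict_apply' measurableSet_Ioc, hfund.measure_eq_tsum (Set.Ioc a b)]
    _ = ENNReal.ofReal |a - b| := by
        rw [Real.volume_Ioc, abs_sub_comm, abs_of_nonneg (sub_nonneg.2 hab)]

variable [Fintype ι]

/-- The uniform distribution on the cube `[0, δ]^ι`, as the law of independent uniform
coordinates. -/
noncomputable def uniformOffset (ι : Type*) [Fintype ι] (δ : ℝ) : Measure (ι → ℝ) :=
  Measure.pi fun _ => volume[|Set.Icc 0 δ]

lemma isProbabilityMeasure_cond_Icc (hδ : 0 < δ) :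
    IsProbabilityMeasure (volume[|Set.Icc 0 δ] : Measure ℝ) :=
  cond_isProbabilityMeasure_of_finite (by simpa using hδ) (by simp)

lemma isProbabilityMeasure_uniformOffset (hδ : 0 < δ) :
    IsProbabilityMeasure (uniformOffset ι δ) := by
  have := isProbabilityMeasure_cond_Icc hδ
  unfold uniformOffset
  infer_instance

lemma uniformOffset_eq_smul_restrict (hδ : 0 < δ) :
    uniformOffset ι δ = ENNReal.ofReal (1 / δ ^ Fintype.card ι) •
      volume.restrict (Set.univ.pi fun _ : ι => Set.Icc 0 δ) := by
  refine Measure.pi_eq fun s _ => ?_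
  simp only [ProbabilityTheory.cond, Measure.smul_apply, smul_eq_mul, volume_pi,
    Measure.restrict_pi_pi, Measure.pi_pi, Finset.prod_mul_distrib, Finset.prod_const,
    Finset.card_univ, Real.volume_Icc, sub_zero]
  rw [one_div, ENNReal.ofReal_inv_of_pos (by positivity), ENNReal.ofReal_pow hδ.le,
    ENNReal.inv_pow]

lemma uniformOffset_setOf_floor_ne_le (hδ : 0 < δ) (i : ι) (a b : ℝ) :
    uniformOffset ι δ {ℓ | ⌊(a - ℓ i) / δ⌋ ≠ ⌊(b - ℓ i) / δ⌋} ≤ ENNReal.ofReal (|a - b| / δ) := by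
  have := isProbabilityMeasure_cond_Icc hδ
  calc uniformOffset ι δ {ℓ | ⌊(a - ℓ i) / δ⌋ ≠ ⌊(b - ℓ i) / δ⌋}
      ≤ (uniformOffset ι δ).map (Function.eval i) {s | ⌊(a - s) / δ⌋ ≠ ⌊(b - s) / δ⌋} :=
        Measure.le_map_apply (measurable_pi_apply i).aemeasurable _
    _ = volume[|Set.Icc 0 δ] {s | ⌊(a - s) / δ⌋ ≠ ⌊(b - s) / δ⌋} := by
        rw [uniformOffset, (measurePreserving_eval _ i).map_eq]
    _ ≤ (ENNReal.ofReal δ)⁻¹ * ENNReal.ofReal |a - b| := by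
        rw [ProbabilityTheory.cond, Measure.smul_apply, Real.volume_Icc, sub_zero, smul_eq_mul]
        gcongr
        exact volume_restrict_Icc_setOf_floor_ne_le hδ a b
    _ = ENNReal.ofReal (|a - b| / δ) := by
        rw [ENNReal.ofReal_div_of_pos hδ, ENNReal.div_eq_inv_mul]

lemma uniformOffset_real_setOf_gridIndex_ne_le (hδ : 0 < δ) (x y : ι → ℝ) :
    (uniformOffset ι δ).real {ℓ | gridIndex δ ℓ x ≠ gridIndex δ ℓ y} ≤
      (∑ i, |x i - y i|) / δ := by
  have := isProbabilityMeasure_uniformOffset (ι := ι) hδ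
  have hunion : {ℓ | gridIndex δ ℓ x ≠ gridIndex δ ℓ y} =
      ⋃ i, {ℓ | ⌊(x i - ℓ i) / δ⌋ ≠ ⌊(y i - ℓ i) / δ⌋} := by
    ext ℓ
    simp [gridIndex, Function.ne_iff]
  rw [hunion, Finset.sum_div]
  refine (measureReal_iUnion_fintype_le _).trans (Finset.sum_le_sum fun i _ => ?_)
  exact ENNReal.toReal_le_of_le_ofReal (by positivity)
    (uniformOffset_setOf_floor_ne_le hδ i (x i) (y i))

end Grid

lemma excessProb_gridIndex_le_add {k : ℕ} {p δ : ℝ} (hp : 1 ≤ p) (hδ : 0 < δ)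
    (μ ν : Measure (Fin k → ℝ)) (x y : Fin k → ℝ) :
    excessProb (uniformOffset (Fin k) δ) (gridIndex δ) μ ν y ≤
      excessProb (uniformOffset (Fin k) δ) (gridIndex δ) μ ν x +
        (k : ℝ) ^ (1 - 1 / p) / δ * pnorm p (x - y) := by
  have := isProbabilityMeasure_uniformOffset (ι := Fin k) hδ
  refine (excessProb_le_add x y).trans (add_le_add_right ?_ _)
  calc (uniformOffset (Fin k) δ).real {ℓ | gridIndex δ ℓ x ≠ gridIndex δ ℓ y}
      ≤ (∑ i, |x i - y i|) / δ := uniformOffset_real_setOf_gridIndex_ne_le hδ x y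
    _ ≤ (k : ℝ) ^ (1 - 1 / p) * pnorm p (x - y) / δ := by
        gcongr
        exact sum_abs_le_rpow_mul_pnorm hp (x - y)
    _ = (k : ℝ) ^ (1 - 1 / p) / δ * pnorm p (x - y) := by ring

lemma lintegral_tvDist_map_rnd_le {k : ℕ} {p δ ε : ℝ} (hp : 1 ≤ p) (hδ : 0 < δ) (hε : 0 ≤ ε)
    {μ ν : Measure (Fin k → ℝ)} [IsProbabilityMeasure μ] [IsProbabilityMeasure ν]
    (h : ∀ A, MeasurableSet A → μ A ≤ ν (thick p ε A) + ENNReal.ofReal ε) :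
    ∫⁻ ℓ, tvDist (μ.map (rnd δ ℓ)) (ν.map (rnd δ ℓ)) ∂uniformOffset (Fin k) δ ≤
      ENNReal.ofReal ((1 + (k : ℝ) ^ (1 - 1 / p) / δ) * ε) := by
  set U := uniformOffset (Fin k) δ
  set L : ℝ := (k : ℝ) ^ (1 - 1 / p) / δ
  have : IsProbabilityMeasure U := isProbabilityMeasure_uniformOffset hδ
  have hL : 0 ≤ L := by positivity
  have hg := measurable_uncurry_gridIndex (ι := Fin k) δ
  set f := excessProb U (gridIndex δ) μ ν
  have htv : ∫⁻ ℓ, tvDist (μ.map (gridIndex δ ℓ)) (ν.map (gridIndex δ ℓ)) ∂U +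
      ∫⁻ x, ENNReal.ofReal (f x) ∂ν ≤ ∫⁻ x, ENNReal.ofReal (f x) ∂μ :=
    lintegral_tvDist_map_add_le hg (by simp only [measure_univ])
  have hf : ∫⁻ x, ENNReal.ofReal (f x) ∂μ ≤
      ∫⁻ x, ENNReal.ofReal (f x) ∂ν + (ENNReal.ofReal (L * ε) * ν Set.univ + ENNReal.ofReal ε) :=
    lintegral_le_of_measure_le_measure_thick (measurable_excessProb hg)
      (fun _ => measureReal_nonneg) (fun _ => measureReal_le_one) hL hε
      (excessProb_gridIndex_le_add hp hδ μ ν) h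
  have hfin : ∫⁻ x, ENNReal.ofReal (f x) ∂ν ≠ ⊤ := by
    rw [lintegral_excessProb hg]
    exact (IsFiniteMeasure.lintegral_lt_top_of_bounded_to_ennreal U
      ⟨1, fun _ => prob_le_one⟩).ne
  calc ∫⁻ ℓ, tvDist (μ.map (rnd δ ℓ)) (ν.map (rnd δ ℓ)) ∂U
      ≤ ∫⁻ ℓ, tvDist (μ.map (gridIndex δ ℓ)) (ν.map (gridIndex δ ℓ)) ∂U :=
        lintegral_mono fun ℓ => tvDist_map_rnd_le δ ℓ μ ν
    _ ≤ ENNReal.ofReal (L * ε) * ν Set.univ + ENNReal.ofReal ε :=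
        (ENNReal.add_le_add_iff_left hfin).1 ((add_comm _ _).trans_le (htv.trans hf))
    _ = ENNReal.ofReal ((1 + L) * ε) := by
        rw [measure_univ, mul_one, ← ENNReal.ofReal_add (by positivity) hε]
        ring_nf

/-- Lemma (TVdistanceBound): if `π_p(F, F̂) ≤ ε`, then the average over a uniformly
random offset `ℓ ∈ [0,δ]^k` of the total variation distance between the rounded
distributions is at most `(1 + k^{1-1/p}/δ) ε`. -/
theorem stmt13 (k : ℕ) (hk : 0 < k) (p : ℝ) (hp : 1 ≤ p) (δ ε : ℝ) (hδ : 0 < δ)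
    (hε : 0 ≤ ε)
    (F F' : Measure (Fin k → ℝ)) [IsProbabilityMeasure F] [IsProbabilityMeasure F']
    (hπ : prokhorov p F F' ≤ ε) :
    ENNReal.ofReal (1 / δ ^ k) *
        ∫⁻ ℓ in Set.univ.pi fun _ : Fin k => Set.Icc (0 : ℝ) δ,
          tvDist (F.map (rnd δ ℓ)) (F'.map (rnd δ ℓ)) ≤
      ENNReal.ofReal ((1 + (k : ℝ) ^ (1 - 1 / p) / δ) * ε) := by
  have hbound : ∀ ε' > ε,
      ∫⁻ ℓ, tvDist (F.map (rnd δ ℓ)) (F'.map (rnd δ ℓ)) ∂uniformOffset (Fin k) δ ≤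
        ENNReal.ofReal ((1 + (k : ℝ) ^ (1 - 1 / p) / δ) * ε') := fun ε' hε' =>
    lintegral_tvDist_map_rnd_le hp hδ (hε.trans hε'.le) fun _ hA =>
      measure_le_measure_thick_add_of_prokhorov_lt (hπ.trans_lt hε') hA
  have hcont : Continuous fun ε' =>
      ENNReal.ofReal ((1 + (k : ℝ) ^ (1 - 1 / p) / δ) * ε') :=
    ENNReal.continuous_ofReal.comp (by fun_prop)
  rw [uniformOffset_eq_smul_restrict hδ, Fintype.card_fin] at hbound
  simp only [lintegral_smul_measure, smul_eq_mul] at hbound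
  exact ge_of_tendsto ((hcont.tendsto ε).mono_left nhdsWithin_le_nhds)
    (eventually_mem_nhdsWithin.mono hbound : ∀ᶠ ε' in 𝓝[>] ε, _)
end
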